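/- arXiv:1206.0268 — 3 statements merged into one kernel-verified Lean document; each statement's English description precedes it below -/
import Mathlib

section
/- Let c ∈ (0,1), let (Ψ_δ)_{δ>0} satisfy Assumption A with constant C_Ψ and I_δ = 0 for all δ > 0, and let R₀ be an unperturbed wave. Then there exist constants C_G > 0 and δ* > 0, both independent of δ and S, such that for every 0 < δ < δ* and every δ-admissible S: ‖A G(S)‖_∞ ≤ C_G δ and ‖A² G(S)‖_∞ ≤ C_G (1 + ‖S''‖_∞) δ². -/
open MeasureTheory Real Filter Topology

/-- The averaging operator `(A F)(x) = ∫_{x-1/2}^{x+1/2} F(s) ds`. -/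
noncomputable def Aop (F : ℝ → ℝ) : ℝ → ℝ := fun x => ∫ s in (x - 1/2)..(x + 1/2), F s

/-- The operator `M F = A(A F) - c² F`. -/
noncomputable def Mop (c : ℝ) (F : ℝ → ℝ) : ℝ → ℝ := fun x => Aop (Aop F) x - c ^ 2 * F x

/-- Membership in `W^{2,∞}(ℝ)`. -/
def IsW2inf (S : ℝ → ℝ) : Prop :=
  Differentiable ℝ S ∧ (∃ C : ℝ, ∀ x, |S x| ≤ C ∧ |deriv S x| ≤ C) ∧
    ∃ K : NNReal, LipschitzWith K (deriv S)

/-- Assumption A for the family `(Ψ_δ)_{δ>0}` with constant `C_Ψ`. -/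
def AssumptionA (Ψ : ℝ → ℝ → ℝ) (CΨ : ℝ) : Prop :=
  0 < CΨ ∧ ∀ δ : ℝ, 0 < δ →
    Ψ δ 0 = 0 ∧ ContDiff ℝ 2 (Ψ δ) ∧
    (∀ r : ℝ, δ ≤ |r| → deriv (Ψ δ) r = Real.sign r) ∧
    (∀ r : ℝ, |deriv (Ψ δ) r| ≤ CΨ) ∧
    (∀ r : ℝ, |deriv (deriv (Ψ δ)) r| ≤ CΨ / δ)

/-- The quantity `I_δ = ½ ∫_ℝ (Ψ'_δ(r) − sgn r) dr`. -/
noncomputable def Idelta (Ψ : ℝ → ℝ → ℝ) (δ : ℝ) : ℝ :=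
  (1 / 2) * ∫ r : ℝ, (deriv (Ψ δ) r - Real.sign r)

/-- An unperturbed wave `R₀`: a `W^{2,∞}` solution of `M R₀ = A²(sgn ∘ R₀) + μ₀` with
`R₀(0) = 0` which leaves a neighbourhood of `0` monotonically and stays away from `0`. -/
def UnperturbedWave (c : ℝ) (R₀ : ℝ → ℝ) : Prop :=
  IsW2inf R₀ ∧ R₀ 0 = 0 ∧
  (∃ μ₀ : ℝ, ∀ x, Mop c R₀ x = Aop (Aop (fun y => Real.sign (R₀ y))) x + μ₀) ∧
  ∃ x₀ r₀ d₀ : ℝ, 0 < x₀ ∧ 0 < r₀ ∧ 0 < d₀ ∧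
    (∀ x, x₀ < x → r₀ < R₀ x) ∧ (∀ x, x < -x₀ → R₀ x < -r₀) ∧
    (∀ x, |x| < x₀ → d₀ < deriv R₀ x)

/-- `δ`-admissibility of a corrector `S` relative to `R₀`. -/
def Admissible (δ : ℝ) (R₀ S : ℝ → ℝ) : Prop :=
  IsW2inf S ∧ S 0 = 0 ∧
  ∃ xm xp : ℝ, xm < 0 ∧ 0 < xp ∧
    R₀ xm + S xm = -δ ∧ R₀ xp + S xp = δ ∧
    (∀ x, x < xm → R₀ x + S x < -δ) ∧
    (∀ x, xp < x → δ < R₀ x + S x) ∧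
    (∀ x, xm < x → x < xp →
      deriv R₀ 0 / 2 < deriv R₀ x + deriv S x ∧ deriv R₀ x + deriv S x < 2 * deriv R₀ 0)

/-- The nonlinear superposition operator `G(S)(x) = Ψ'_δ(R₀(x)+S(x)) − sgn(R₀(x))`. -/
noncomputable def Gop (Ψ : ℝ → ℝ → ℝ) (δ : ℝ) (R₀ S : ℝ → ℝ) : ℝ → ℝ :=
  fun x => deriv (Ψ δ) (R₀ x + S x) - Real.sign (R₀ x)


lemma aux_sign_meas : Measurable Real.sign := by
  unfold Real.sign
  exact Measurable.ite measurableSet_Iio measurable_const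
    (Measurable.ite measurableSet_Ioi measurable_const measurable_const)

lemma aux_abs_sign_le (r : ℝ) : |Real.sign r| ≤ 1 := by
  rcases Real.sign_apply_eq r with h | h | h <;> rw [h] <;> norm_num

/-- zero outside `[p,q]`: enlarge the interval of integration -/
lemma aux_enlarge (G : ℝ → ℝ) (hG : ∀ a b, IntervalIntegrable G volume a b) (p q a b : ℝ)
    (hp : ∀ x ≤ p, G x = 0) (hq : ∀ x, q ≤ x → G x = 0) (ha : a ≤ p) (hb : q ≤ b) :
    ∫ x in a..b, G x = ∫ x in p..q, G x := by
  have h1 : ∫ x in a..p, G x = 0 := by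
    rw [intervalIntegral.integral_congr (g := fun _ => (0:ℝ))]
    · simp
    · intro x hx
      rw [Set.uIcc_of_le ha] at hx
      exact hp x hx.2
  have h2 : ∫ x in q..b, G x = 0 := by
    rw [intervalIntegral.integral_congr (g := fun _ => (0:ℝ))]
    · simp
    · intro x hx
      rw [Set.uIcc_of_le hb] at hx
      exact hq x hx.1
  rw [← intervalIntegral.integral_add_adjacent_intervals (hG a p) (hG p b),
    ← intervalIntegral.integral_add_adjacent_intervals (hG p q) (hG q b), h1, h2]
  ring

/-- FTC -/
lemma aux_ftc (ψ R : ℝ → ℝ) (hψ : Differentiable ℝ ψ) (hR : Differentiable ℝ R) (a b : ℝ)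
    (hab : a ≤ b) (hne : ∀ x ∈ Set.Ioo a b, x ≠ 0 → R x ≠ 0)
    (hint : IntervalIntegrable (fun x => (deriv ψ (R x) - Real.sign (R x)) * deriv R x) volume a b) :
    ∫ x in a..b, (deriv ψ (R x) - Real.sign (R x)) * deriv R x
      = (ψ (R b) - |R b|) - (ψ (R a) - |R a|) := by
  refine MeasureTheory.integral_eq_of_hasDerivAt_off_countable_of_le
    (fun x => ψ (R x) - |R x|) _ hab (s := {0}) (Set.countable_singleton 0) ?_ ?_ hint
  · exact ((hψ.continuous.comp hR.continuous).sub hR.continuous.abs).continuousOn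
  · intro x hx
    have h0 : R x ≠ 0 := hne x hx.1 hx.2
    have h1 := (hψ (R x)).hasDerivAt.comp x (hR x).hasDerivAt
    have h2 : HasDerivAt (fun y => |y|) (Real.sign (R x)) (R x) := by
      rcases lt_or_gt_of_ne h0 with h | h
      · rw [Real.sign_of_neg h]; exact hasDerivAt_abs_neg h
      · rw [Real.sign_of_pos h]; exact hasDerivAt_abs_pos h
    have h3 := h2.comp x (hR x).hasDerivAt
    have h4 := h1.sub h3
    rw [sub_mul]
    exact h4

lemma aux_ind (a b p w D : ℝ) (hw : 0 ≤ w) (hD : 0 ≤ D) (hab : a ≤ b) :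
    IntervalIntegrable ((Set.Icc (p - w) (p + w)).indicator fun _ => D) volume a b ∧
    ∫ x in a..b, (Set.Icc (p - w) (p + w)).indicator (fun _ => D) x ≤ 2 * w * D := by
  have hi : Integrable ((Set.Icc (p - w) (p + w)).indicator fun _ => D) volume := by
    rw [integrable_indicator_iff measurableSet_Icc]
    exact integrableOn_const (by simp)
  refine ⟨hi.intervalIntegrable, ?_⟩
  rw [intervalIntegral.integral_of_le hab]
  refine (setIntegral_le_integral hi (Eventually.of_forall fun x => ?_)).trans ?_
  · exact Set.indicator_nonneg (fun _ _ => hD) x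
  · rw [integral_indicator measurableSet_Icc, setIntegral_const]
    simp only [measureReal_def, Real.volume_Icc, smul_eq_mul]
    rw [ENNReal.toReal_ofReal (by linarith)]
    apply le_of_eq; ring

lemma aux_A1 (G : ℝ → ℝ) (w B : ℝ) (hw : 0 ≤ w) (hB : 0 ≤ B) (hGB : ∀ x, |G x| ≤ B)
    (hz : ∀ x, w ≤ |x| → G x = 0) (x : ℝ) : |Aop G x| ≤ 2 * w * B := by
  unfold Aop
  have hab : x - 1/2 ≤ x + 1/2 := by linarith
  have h := aux_ind (x-1/2) (x+1/2) 0 w B hw hB hab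
  rw [← Real.norm_eq_abs]
  refine (intervalIntegral.norm_integral_le_of_norm_le hab
    (Eventually.of_forall fun s _ => ?_) h.1).trans h.2
  rw [Real.norm_eq_abs]
  by_cases hs : s ∈ Set.Icc (0 - w) (0 + w)
  · rw [Set.indicator_of_mem hs]; exact hGB s
  · rw [Set.indicator_of_notMem hs, hz s, abs_zero]
    by_contra hc
    rw [not_le, abs_lt] at hc
    exact hs ⟨by linarith, by linarith⟩

lemma aux_A2 (G : ℝ → ℝ) (hG : ∀ a b, IntervalIntegrable G volume a b) (w B : ℝ) (hw : 0 ≤ w)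
    (hw2 : w < 1/2) (hB : 0 ≤ B) (hGB : ∀ x, |G x| ≤ B)
    (hz : ∀ x, w ≤ |x| → G x = 0) (x : ℝ) :
    |Aop (Aop G) x| ≤ |∫ s in (-w)..w, G s| + 8 * w ^ 2 * B := by
  set J := ∫ s in (-w)..w, G s with hJ
  have hzp : ∀ x, w ≤ x → G x = 0 := fun x hx => hz x (hx.trans (le_abs_self x))
  have hzm : ∀ x ≤ -w, G x = 0 := fun x hx => hz x (by
    have := neg_le_abs x
    linarith)
  have hab : x - 1/2 ≤ x + 1/2 := by linarith
  have hD : 0 ≤ 2 * w * B := by positivity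
  have h1 := aux_ind (x-1/2) (x+1/2) (1/2) w (2 * w * B) hw hD hab
  have h2 := aux_ind (x-1/2) (x+1/2) (-(1/2)) w (2 * w * B) hw hD hab
  have hpt : ∀ s, ‖Aop G s‖ ≤ |J| +
      ((Set.Icc (1/2 - w) (1/2 + w)).indicator (fun _ => 2 * w * B) s +
      (Set.Icc (-(1/2) - w) (-(1/2) + w)).indicator (fun _ => 2 * w * B) s) := by
    intro s
    rw [Real.norm_eq_abs]
    have n1 : 0 ≤ (Set.Icc (1/2 - w) (1/2 + w)).indicator (fun _ => 2 * w * B) s :=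
      Set.indicator_nonneg (fun _ _ => hD) s
    have n2 : 0 ≤ (Set.Icc (-(1/2) - w) (-(1/2) + w)).indicator (fun _ => 2 * w * B) s :=
      Set.indicator_nonneg (fun _ _ => hD) s
    have n3 := abs_nonneg J
    have hb := aux_A1 G w B hw hB hGB hz s
    by_cases c1 : s ∈ Set.Icc (1/2 - w) (1/2 + w)
    · rw [Set.indicator_of_mem c1]; linarith
    by_cases c2 : s ∈ Set.Icc (-(1/2) - w) (-(1/2) + w)
    · rw [Set.indicator_of_mem c2]; linarith
    suffices h : |Aop G s| ≤ |J| by linarith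
    rw [Set.mem_Icc, not_and_or, not_le, not_le] at c1 c2
    have hab' : s - 1/2 ≤ s + 1/2 := by linarith
    have hzero : (∀ y ∈ Set.uIcc (s - 1/2) (s + 1/2), G y = 0) → |Aop G s| ≤ |J| := by
      intro h
      unfold Aop
      rw [intervalIntegral.integral_congr (g := fun _ => (0:ℝ)) h]
      simp
    rcases c1 with c1 | c1
    · rcases c2 with c2 | c2
      · apply hzero
        intro y hy
        rw [Set.uIcc_of_le hab'] at hy
        exact hzm y (by linarith [hy.2])
      · unfold Aop
        rw [aux_enlarge G hG (-w) w _ _ hzm hzp (by linarith) (by linarith)]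
    · apply hzero
      intro y hy
      rw [Set.uIcc_of_le hab'] at hy
      exact hzp y (by linarith [hy.1])
  have hsum := h1.1.add h2.1
  have hc : IntervalIntegrable (fun _ : ℝ => |J|) volume (x-1/2) (x+1/2) :=
    intervalIntegrable_const
  rw [← Real.norm_eq_abs]
  refine (intervalIntegral.norm_integral_le_of_norm_le hab
    (Eventually.of_forall fun s _ => hpt s) (hc.add hsum)).trans ?_
  rw [intervalIntegral.integral_add hc hsum, intervalIntegral.integral_add h1.1 h2.1,
    intervalIntegral.integral_const]
  have : (x + 1/2 - (x - 1/2)) • |J| = |J| := by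
    rw [smul_eq_mul]; ring
  rw [this]
  nlinarith [h1.2, h2.2]

lemma aux_sign (R₀ : ℝ → ℝ) (c : ℝ) (h : UnperturbedWave c R₀) (x : ℝ) :
    Real.sign (R₀ x) = Real.sign x := by
  obtain ⟨⟨hd, -, -⟩, h0, -, x₀, r₀, d₀, hx₀, hr₀, hd₀, hp, hm, hder⟩ := h
  have hmono : StrictMonoOn R₀ (Set.Icc (-x₀) x₀) := by
    apply strictMonoOn_of_deriv_pos (convex_Icc _ _) hd.continuous.continuousOn
    intro y hy
    rw [interior_Icc] at hy
    exact hd₀.trans (hder y (abs_lt.2 hy))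
  have hz : (0:ℝ) ∈ Set.Icc (-x₀) x₀ := ⟨by linarith, hx₀.le⟩
  rcases lt_trichotomy x 0 with hx | hx | hx
  · rw [Real.sign_of_neg hx, Real.sign_of_neg]
    by_cases hc : x < -x₀
    · linarith [hm x hc]
    · have := hmono (a := x) (b := 0) ⟨by linarith, by linarith⟩ hz hx
      linarith
  · rw [hx, h0]
  · rw [Real.sign_of_pos hx, Real.sign_of_pos]
    by_cases hc : x₀ < x
    · linarith [hp x hc]
    · have := hmono (a := 0) (b := x) hz ⟨by linarith, by linarith⟩ hx
      linarith

lemma aux_int (ψ' R R₀ : ℝ → ℝ) (hψ : Continuous ψ') (hR : Continuous R) (hR₀ : Continuous R₀)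
    (a b : ℝ) :
    IntervalIntegrable (fun x => ψ' (R x) - Real.sign (R₀ x)) volume a b := by
  refine ((hψ.comp hR).intervalIntegrable a b).sub ?_
  refine (intervalIntegrable_const (c := (1:ℝ))).mono_fun
    (aux_sign_meas.comp hR₀.measurable).aestronglyMeasurable (Eventually.of_forall fun x => ?_)
  simpa using aux_abs_sign_le (R₀ x)

lemma aux_psi (ψ : ℝ → ℝ) (δ : ℝ) (hδ : 0 < δ) (h1 : Differentiable ℝ ψ)
    (h2 : Continuous (deriv ψ)) (h3 : ∀ r : ℝ, δ ≤ |r| → deriv ψ r = Real.sign r)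
    (hI : ∫ r : ℝ, (deriv ψ r - Real.sign r) = 0) : ψ δ = ψ (-δ) := by
  have hs : Function.support (fun r => deriv ψ r - Real.sign r) ⊆ Set.Ioc (-δ) δ := by
    intro r hr
    by_contra hc
    apply hr
    have : δ ≤ |r| := by
      by_contra h
      rw [not_le, abs_lt] at h
      exact hc ⟨h.1, h.2.le⟩
    simp [h3 r this]
  have e := intervalIntegral.integral_eq_integral_of_support_subset (μ := volume) hs
  rw [hI] at e
  have hi := aux_int (deriv ψ) id id h2 continuous_id continuous_id (-δ) δ
  have f := aux_ftc ψ id h1 differentiable_id (-δ) δ (by linarith) (fun x _ h => h)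
    (by simpa using hi)
  simp only [id, deriv_id', mul_one, abs_neg] at f
  rw [e] at f
  linarith

/-- for `δ`-admissible `S`, `‖A G(S)‖_∞ ≤ C_G δ` and
`‖A² G(S)‖_∞ ≤ C_G (1 + ‖S''‖_∞) δ²`. -/
theorem stmt10 (c : ℝ) (hc0 : 0 < c) (hc1 : c < 1)
    (Ψ : ℝ → ℝ → ℝ) (CΨ : ℝ) (hA : AssumptionA Ψ CΨ)
    (hI : ∀ δ : ℝ, 0 < δ → Idelta Ψ δ = 0)
    (R₀ : ℝ → ℝ) (hR₀ : UnperturbedWave c R₀) :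
    ∃ CG δs : ℝ, 0 < CG ∧ 0 < δs ∧
      ∀ δ : ℝ, 0 < δ → δ < δs → ∀ S : ℝ → ℝ, Admissible δ R₀ S →
        (∀ x, |Aop (Gop Ψ δ R₀ S) x| ≤ CG * δ) ∧
        (∀ K : NNReal, LipschitzWith K (deriv S) →
          ∀ x, |Aop (Aop (Gop Ψ δ R₀ S)) x| ≤ CG * (1 + (K : ℝ)) * δ ^ 2) := by
  obtain ⟨hC, hA⟩ := hA
  have hsgn := aux_sign R₀ c hR₀
  obtain ⟨⟨hRd, -, K₀, hK₀⟩, hR0, -, x₀, r₀, d₀, hx₀, hr₀, hd₀, -, -, hder⟩ := hR₀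
  set d := deriv R₀ 0 with hd_def
  have hd : 0 < d := hd₀.trans (hder 0 (by simpa using hx₀))
  clear_value d
  set B := CΨ + 1 with hB_def
  have hB : 0 < B := by linarith
  refine ⟨4 * B / d + (4 / d + 4 * K₀ / d + 8) * (4 * B / d ^ 2), d / 8, by positivity,
    by positivity, ?_⟩
  intro δ hδ hδs S hS
  obtain ⟨-, hψ2, hψs, hψb, -⟩ := hA δ hδ
  obtain ⟨⟨hSd, -, -⟩, hS0, xm, xp, hxm, hxp, hRm, hRp, hlt, hgt, hR'⟩ := hS
  set ψ := Ψ δ with hψ_def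
  have hψd : Differentiable ℝ ψ := hψ2.differentiable (by norm_num)
  have hψc : Continuous (deriv ψ) := hψ2.continuous_deriv (by norm_num)
  have hψe : ψ δ = ψ (-δ) := by
    apply aux_psi ψ δ hδ hψd hψc hψs
    have := hI δ hδ
    unfold Idelta at this
    linarith
  set R : ℝ → ℝ := fun x => R₀ x + S x with hR_def
  have hRdiff : Differentiable ℝ R := hRd.add hSd
  have hRderiv : ∀ x, deriv R x = deriv R₀ x + deriv S x := fun x =>
    deriv_fun_add (hRd x) (hSd x)
  have hRz : R 0 = 0 := by simp [hR_def, hR0, hS0]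
  have hRm' : R xm = -δ := hRm
  have hRp' : R xp = δ := hRp
  have hmono : StrictMonoOn R (Set.Icc xm xp) := by
    apply strictMonoOn_of_deriv_pos (convex_Icc _ _) hRdiff.continuous.continuousOn
    intro y hy
    rw [interior_Icc] at hy
    rw [hRderiv]
    linarith [(hR' y hy.1 hy.2).1]
  have hlow := (convex_Icc xm xp).mul_sub_le_image_sub_of_le_deriv (f := R) (C := d / 2)
    hRdiff.continuous.continuousOn hRdiff.differentiableOn (by
      intro y hy
      rw [interior_Icc] at hy
      rw [hRderiv]
      linarith [(hR' y hy.1 hy.2).1])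
  have m0 : (0:ℝ) ∈ Set.Icc xm xp := ⟨hxm.le, hxp.le⟩
  have mm : xm ∈ Set.Icc xm xp := ⟨le_rfl, by linarith⟩
  have mp : xp ∈ Set.Icc xm xp := ⟨by linarith, le_rfl⟩
  set w := 2 * δ / d with hw_def
  have hwd : w * d = 2 * δ := by rw [hw_def]; field_simp
  have hw : 0 < w := by positivity
  have hw2 : w < 1/2 := by
    rw [hw_def, div_lt_iff₀ hd]; linarith
  have hxpw : xp ≤ w := by
    have := hlow 0 m0 xp mp hxp.le
    rw [hRz, hRp'] at this
    rw [hw_def, le_div_iff₀ hd]; linarith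
  have hxmw : -w ≤ xm := by
    have := hlow xm mm 0 m0 hxm.le
    rw [hRz, hRm'] at this
    rw [neg_le, hw_def, le_div_iff₀ hd]; linarith
  set G := Gop Ψ δ R₀ S with hG_def
  have hGx : ∀ x, G x = deriv ψ (R x) - Real.sign (R₀ x) := fun x => rfl
  have hGi : ∀ a b, IntervalIntegrable G volume a b := fun a b =>
    aux_int (deriv ψ) R R₀ hψc hRdiff.continuous hRd.continuous a b
  have hGB : ∀ x, |G x| ≤ B := by
    intro x
    rw [hGx]
    refine (abs_sub _ _).trans ?_
    linarith [hψb (R x), aux_abs_sign_le (R₀ x)]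
  have hzp : ∀ x, xp ≤ x → G x = 0 := by
    intro x hx
    have h1 : δ ≤ R x := by
      rcases hx.eq_or_lt with h | h
      · rw [← h, hRp']
      · exact (hgt x h).le
    rw [hGx, hψs _ (h1.trans (le_abs_self _)), hsgn, Real.sign_of_pos (hδ.trans_le h1),
      Real.sign_of_pos (hxp.trans_le hx), sub_self]
  have hzm : ∀ x ≤ xm, G x = 0 := by
    intro x hx
    have h1 : R x ≤ -δ := by
      rcases hx.eq_or_lt with h | h
      · rw [h, hRm']
      · exact (hlt x h).le
    have h2 : δ ≤ |R x| := by linarith [neg_le_abs (R x)]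
    rw [hGx, hψs _ h2, hsgn, Real.sign_of_neg (by linarith),
      Real.sign_of_neg (by linarith), sub_self]
  have hz : ∀ x, w ≤ |x| → G x = 0 := by
    intro x hx
    rcases le_abs.1 hx with h | h
    · exact hzp x (hxpw.trans h)
    · exact hzm x (by linarith)
  constructor
  · intro x
    refine (aux_A1 G w B hw.le hB.le hGB hz x).trans ?_
    have e1 : 2 * w * B = 4 * B / d * δ := by rw [hw_def]; ring
    rw [e1]
    apply mul_le_mul_of_nonneg_right _ hδ.le
    have : 0 ≤ (4 / d + 4 * K₀ / d + 8) * (4 * B / d ^ 2) := by positivity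
    linarith
  · intro K hK x
    refine (aux_A2 G hGi w B hw.le hw2 hB.le hGB hz x).trans ?_
    rw [aux_enlarge G hGi xm xp _ _ hzm hzp hxmw hxpw]
    set J := ∫ s in xm..xp, G s with hJ
    have hR'c : Continuous (deriv R) := by
      have : deriv R = fun x => deriv R₀ x + deriv S x := funext hRderiv
      rw [this]
      exact hK₀.continuous.add hK.continuous
    have hGR : IntervalIntegrable (fun s => G s * deriv R s) volume xm xp :=
      (hGi xm xp).mul_continuousOn hR'c.continuousOn
    have hsR : ∀ s ∈ Set.uIcc xm xp, G s * deriv R s =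
        (deriv ψ (R s) - Real.sign (R s)) * deriv R s := by
      intro s hs
      rw [Set.uIcc_of_le (by linarith)] at hs
      have : Real.sign (R s) = Real.sign s := by
        rcases lt_trichotomy s 0 with h | h | h
        · rw [Real.sign_of_neg h, Real.sign_of_neg]
          have := hmono hs m0 h
          linarith
        · rw [h, hRz]
        · rw [Real.sign_of_pos h, Real.sign_of_pos]
          have := hmono m0 hs h
          linarith
      rw [hGx, this, hsgn]
    have hzero : ∫ s in xm..xp, G s * deriv R s = 0 := by
      rw [intervalIntegral.integral_congr hsR, aux_ftc ψ R hψd hRdiff xm xp (by linarith)]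
      · rw [hRm', hRp', hψe, abs_neg]; ring
      · intro s hs hs0 h
        exact hs0 (hmono.injOn ⟨hs.1.le, hs.2.le⟩ m0 (h.trans hRz.symm))
      · exact ((aux_int (deriv ψ) R R hψc hRdiff.continuous hRdiff.continuous xm xp)).mul_continuousOn
          hR'c.continuousOn
    have hJe : deriv R 0 * J = ∫ s in xm..xp, G s * (deriv R 0 - deriv R s) := by
      have : ∀ s, G s * (deriv R 0 - deriv R s) = deriv R 0 * G s - G s * deriv R s := by
        intro s; ring
      simp_rw [this]
      rw [intervalIntegral.integral_sub ((hGi xm xp).const_mul _) hGR, hzero,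
        intervalIntegral.integral_const_mul, sub_zero]
    have hbd : |deriv R 0 * J| ≤ B * ((K + K₀) * w) * (2 * w) := by
      rw [hJe, ← Real.norm_eq_abs]
      refine (intervalIntegral.norm_integral_le_of_norm_le_const
        (C := B * ((K + K₀) * w)) ?_).trans ?_
      · intro s hs
        rw [Set.uIoc_of_le (by linarith)] at hs
        rw [norm_mul]
        have hsw : |s| ≤ w := abs_le.2 ⟨by linarith [hs.1], by linarith [hs.2]⟩
        have k1 := hK₀.dist_le_mul 0 s
        have k2 := hK.dist_le_mul 0 s
        rw [dist_zero_left, Real.norm_eq_abs, Real.dist_eq] at k1 k2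
        have k3 : |deriv R 0 - deriv R s| ≤ (K + K₀) * w := by
          rw [hRderiv, hRderiv]
          have : deriv R₀ 0 + deriv S 0 - (deriv R₀ s + deriv S s) =
            (deriv R₀ 0 - deriv R₀ s) + (deriv S 0 - deriv S s) := by ring
          rw [this]
          refine (abs_add_le _ _).trans ?_
          have := mul_le_mul_of_nonneg_left hsw K.2
          have := mul_le_mul_of_nonneg_left hsw K₀.2
          simp only [NNReal.val_eq_coe] at *
          linarith
        exact mul_le_mul (hGB s) k3 (abs_nonneg _) hB.le
      · apply mul_le_mul_of_nonneg_left _ (by positivity)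
        rw [abs_of_nonneg (by linarith)]
        linarith
    have hd2 : d / 2 < deriv R 0 := by
      rw [hRderiv]; linarith [(hR' 0 hxm hxp).1]
    have hJb : |J| ≤ 4 / d * (K + K₀) * B * w ^ 2 := by
      rw [abs_mul, abs_of_pos (by linarith)] at hbd
      have h1 : d / 2 * |J| ≤ B * ((K + K₀) * w) * (2 * w) :=
        (mul_le_mul_of_nonneg_right hd2.le (abs_nonneg J)).trans hbd
      have h2 : 4 / d * (K + K₀) * B * w ^ 2 = (B * ((K + K₀) * w) * (2 * w)) / (d / 2) := by
        field_simp; ring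
      rw [h2, le_div_iff₀ (by positivity)]
      linarith
    have hKn : (0:ℝ) ≤ K := K.2
    have hKn0 : (0:ℝ) ≤ K₀ := K₀.2
    calc |J| + 8 * w ^ 2 * B ≤ 4 / d * (K + K₀) * B * w ^ 2 + 8 * w ^ 2 * B := by linarith
      _ = (4 / d * K + 4 * K₀ / d + 8) * (4 * B / d ^ 2) * δ ^ 2 := by
        rw [hw_def]; field_simp; ring
      _ ≤ _ := by
        apply mul_le_mul_of_nonneg_right _ (sq_nonneg δ)
        have e1 : 4 / d * K + 4 * K₀ / d + 8 ≤ (4 / d + 4 * K₀ / d + 8) * (1 + K) := by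
          have a1 : 0 ≤ 4 / d := by positivity
          have a2 : 0 ≤ (4 * K₀ / d + 8) * K := by positivity
          nlinarith
        have e2 : 0 ≤ 4 * B / d ^ 2 := by positivity
        have e3 : 0 ≤ 4 * B / d * (1 + K) := by positivity
        nlinarith [mul_le_mul_of_nonneg_right e1 e2]
end

section
/- Let c ∈ (0,1), let (Ψ_δ)_{δ>0} satisfy Assumption A with constant C_Ψ, and let R₀ be an unperturbed wave. Then there exist constants C_L > 0 and δ* > 0, both independent of δ, such that for every 0 < δ < δ* and all δ-admissible functions S₁ and S₂, writing G_ℓ = G(S_ℓ) for ℓ = 1, 2: ‖A²G₂ − A²G₁‖_∞ + ‖A G₂ − A G₁‖_∞ + δ‖G₂ − G₁‖_∞ ≤ C_L δ ‖S₂' − S₁'‖_∞. -/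
open MeasureTheory Real Filter Topology

/-- The supremum norm `‖f‖_∞ = ⨆ x, |f x|` (for bounded functions). -/
noncomputable def supNorm (f : ℝ → ℝ) : ℝ := ⨆ x : ℝ, |f x|


lemma supNorm_le_of {f : ℝ → ℝ} {K : ℝ} (h : ∀ x, |f x| ≤ K) : supNorm f ≤ K :=
  ciSup_le h

lemma Aop_cont {F : ℝ → ℝ} (h : ∀ a b, IntervalIntegrable F volume a b) :
    Continuous (Aop F) := by
  have hp := intervalIntegral.continuous_primitive h 0
  have : Aop F = fun x => (∫ s in (0:ℝ)..(x + 1/2), F s) - ∫ s in (0:ℝ)..(x - 1/2), F s := by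
    funext x
    exact (intervalIntegral.integral_interval_sub_left (h _ _) (h _ _)).symm
  rw [this]
  exact (hp.comp (by fun_prop : Continuous fun x : ℝ => x + 1/2)).sub
    (hp.comp (by fun_prop : Continuous fun x : ℝ => x - 1/2))

lemma Aop_sub {F G : ℝ → ℝ} (hF : ∀ a b, IntervalIntegrable F volume a b)
    (hG : ∀ a b, IntervalIntegrable G volume a b) (x : ℝ) :
    Aop F x - Aop G x = Aop (fun y => F y - G y) x :=
  (intervalIntegral.integral_sub (hF _ _) (hG _ _)).symm

lemma Aop_bound {D : ℝ → ℝ} {K : ℝ} (h : ∀ x, |D x| ≤ K) (x : ℝ) : |Aop D x| ≤ K := by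
  have := intervalIntegral.norm_integral_le_of_norm_le_const (a := x - 1/2) (b := x + 1/2)
    (f := D) (C := K) (fun y _ => h y)
  have e : |x + 1/2 - (x - 1/2)| = 1 := by
    rw [show x + 1/2 - (x - 1/2) = (1:ℝ) by ring]; simp
  rw [e, mul_one] at this
  exact this

lemma Aop_bound_supp {D : ℝ → ℝ} {K a : ℝ} (ha : 0 ≤ a) (h : ∀ x, |D x| ≤ K)
    (hs : ∀ x, a < |x| → D x = 0) (x : ℝ) : |Aop D x| ≤ K * (2 * a) := by
  have hK : 0 ≤ K := (abs_nonneg _).trans (h 0)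
  have hle : x - 1/2 ≤ x + 1/2 := by linarith
  have hint : Integrable ((Set.Icc (-a) a).indicator fun _ : ℝ => K) := by
    rw [integrable_indicator_iff measurableSet_Icc]
    exact integrableOn_const (by simp)
  have h0 : ∀ y, 0 ≤ (Set.Icc (-a) a).indicator (fun _ : ℝ => K) y :=
    fun y => Set.indicator_nonneg (fun _ _ => hK) y
  have h1 := intervalIntegral.norm_integral_le_of_norm_le (f := D)
    (g := (Set.Icc (-a) a).indicator fun _ : ℝ => K) (μ := volume) hle
    (Filter.Eventually.of_forall (fun y _ => by
      by_cases hy : y ∈ Set.Icc (-a) a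
      · rw [Set.indicator_of_mem hy]; exact h y
      · rw [Set.indicator_of_notMem hy, hs y]
        · simp
        · by_contra hc
          exact hy (Set.mem_Icc.2 (abs_le.1 (not_lt.1 hc)))))
    hint.intervalIntegrable
  refine h1.trans ?_
  rw [intervalIntegral.integral_of_le hle]
  refine (setIntegral_le_integral hint (Filter.Eventually.of_forall h0)).trans ?_
  rw [integral_indicator measurableSet_Icc, setIntegral_const]
  simp only [Measure.real, Real.volume_Icc, smul_eq_mul]
  rw [ENNReal.toReal_ofReal (by linarith)]
  linarith

lemma adm_facts {δ d : ℝ} {R₀ S : ℝ → ℝ} (hδ : 0 < δ) (hd : d = deriv R₀ 0) (hd0 : 0 < d)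
    (hR : Differentiable ℝ R₀) (hR0 : R₀ 0 = 0) (h : Admissible δ R₀ S) :
    (∀ x, 2 * δ / d < x → δ < R₀ x + S x) ∧ (∀ x, x < -(2 * δ / d) → R₀ x + S x < -δ) := by
  obtain ⟨⟨hS, -, -⟩, hS0, xm, xp, hm, hp, em, ep, om, op, hder⟩ := h
  have hdf : Differentiable ℝ (fun x => R₀ x + S x) := hR.add hS
  have hdd : ∀ x, deriv (fun x => R₀ x + S x) x = deriv R₀ x + deriv S x :=
    fun x => deriv_fun_add (hR x) (hS x)
  constructor
  · intro x hx
    apply op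
    obtain ⟨y, hy, he⟩ := exists_deriv_eq_slope (fun x => R₀ x + S x) hp
      hdf.continuous.continuousOn hdf.differentiableOn
    rw [hdd, ep, hR0, hS0] at he
    have h2 := (hder y (hm.trans hy.1) hy.2).1
    rw [he, ← hd, lt_div_iff₀ (by linarith)] at h2
    refine lt_of_le_of_lt ?_ hx
    rw [le_div_iff₀ hd0]
    linarith
  · intro x hx
    apply om
    obtain ⟨y, hy, he⟩ := exists_deriv_eq_slope (fun x => R₀ x + S x) hm
      hdf.continuous.continuousOn hdf.differentiableOn
    rw [hdd, em, hR0, hS0] at he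
    have h2 := (hder y hy.1 (hy.2.trans hp)).1
    rw [he, ← hd, lt_div_iff₀ (by linarith)] at h2
    refine lt_of_lt_of_le hx ?_
    have : -xm ≤ 2 * δ / d := by
      rw [le_div_iff₀ hd0]; linarith
    linarith

lemma Gop_int {Ψ : ℝ → ℝ → ℝ} {δ : ℝ} {R₀ S : ℝ → ℝ} (hΨ : Continuous (deriv (Ψ δ)))
    (hR : Continuous R₀) (hS : Continuous S) (a b : ℝ) :
    IntervalIntegrable (Gop Ψ δ R₀ S) volume a b := by
  have h1 : Continuous fun x => deriv (Ψ δ) (R₀ x + S x) := hΨ.comp (hR.add hS)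
  refine (h1.intervalIntegrable a b).sub ?_
  have hms : Measurable Real.sign := by
    unfold Real.sign
    exact Measurable.ite measurableSet_Iio measurable_const
      (Measurable.ite measurableSet_Ioi measurable_const measurable_const)
  refine (intervalIntegrable_const (c := (1:ℝ))).mono_fun
    (hms.comp hR.measurable).aestronglyMeasurable ?_
  refine Filter.Eventually.of_forall fun x => ?_
  rcases Real.sign_apply_eq (R₀ x) with h | h | h <;> simp [h]

/-- Lipschitz continuity of `G`:
`‖A²G₂ − A²G₁‖_∞ + ‖A G₂ − A G₁‖_∞ + δ ‖G₂ − G₁‖_∞ ≤ C_L δ ‖S₂' − S₁'‖_∞`. -/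
theorem stmt11 (c : ℝ) (hc0 : 0 < c) (hc1 : c < 1)
    (Ψ : ℝ → ℝ → ℝ) (CΨ : ℝ) (hA : AssumptionA Ψ CΨ)
    (R₀ : ℝ → ℝ) (hR₀ : UnperturbedWave c R₀) :
    ∃ CL δs : ℝ, 0 < CL ∧ 0 < δs ∧
      ∀ δ : ℝ, 0 < δ → δ < δs →
        ∀ S₁ S₂ : ℝ → ℝ, Admissible δ R₀ S₁ → Admissible δ R₀ S₂ →
          supNorm (fun x => Aop (Aop (Gop Ψ δ R₀ S₂)) x - Aop (Aop (Gop Ψ δ R₀ S₁)) x)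
            + supNorm (fun x => Aop (Gop Ψ δ R₀ S₂) x - Aop (Gop Ψ δ R₀ S₁) x)
            + δ * supNorm (fun x => Gop Ψ δ R₀ S₂ x - Gop Ψ δ R₀ S₁ x)
          ≤ CL * δ * supNorm (fun x => deriv S₂ x - deriv S₁ x) := by
  obtain ⟨hC, hA⟩ := hA
  obtain ⟨⟨hR, -, -⟩, hR0, -, x₀, r₀, d₀, hx₀, -, hd₀, -, -, hdd⟩ := hR₀
  obtain ⟨d, hd⟩ : ∃ d, d = deriv R₀ 0 := ⟨_, rfl⟩
  have hd0 : 0 < d := by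
    have := hdd 0 (by simpa using hx₀)
    rw [hd]; linarith
  refine ⟨(2 * CΨ / d) * (8 / d + 1), 1, by positivity, one_pos, ?_⟩
  intro δ hδ _ S₁ S₂ h₁ h₂
  obtain ⟨-, hcd, hsgn, -, hb2⟩ := hA δ hδ
  have hΨd : Differentiable ℝ (deriv (Ψ δ)) :=
    (ContDiff.differentiable_deriv_two hcd)
  obtain ⟨f₁p, f₁m⟩ := adm_facts hδ hd hd0 hR hR0 h₁
  obtain ⟨f₂p, f₂m⟩ := adm_facts hδ hd hd0 hR hR0 h₂
  obtain ⟨⟨hS₁, ⟨B₁, hB₁⟩, -⟩, hS₁0, -⟩ := h₁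
  obtain ⟨⟨hS₂, ⟨B₂, hB₂⟩, -⟩, hS₂0, -⟩ := h₂
  obtain ⟨N, hN⟩ : ∃ N, N = supNorm (fun x => deriv S₂ x - deriv S₁ x) := ⟨_, rfl⟩
  have hNb : ∀ x, |deriv S₂ x - deriv S₁ x| ≤ N := by
    intro x
    rw [hN]
    refine le_ciSup (f := fun x => |deriv S₂ x - deriv S₁ x|) ⟨B₂ + B₁, ?_⟩ x
    rintro _ ⟨y, rfl⟩
    exact (abs_sub _ _).trans (add_le_add (hB₂ y).2 (hB₁ y).2)
  rw [← hN]
  have hN0 : 0 ≤ N := (abs_nonneg _).trans (hNb 0)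
  have hSdiff : ∀ x, |S₂ x - S₁ x| ≤ N * |x| := by
    intro x
    have := Convex.norm_image_sub_le_of_norm_deriv_le (f := fun x => S₂ x - S₁ x) (C := N)
      (s := Set.univ) (x := 0) (y := x) (fun y _ => (hS₂ y).sub (hS₁ y))
      (fun y _ => by rw [deriv_fun_sub (hS₂ y) (hS₁ y)]; exact hNb y)
      convex_univ (Set.mem_univ _) (Set.mem_univ _)
    simpa [hS₁0, hS₂0] using this
  have hLip : ∀ r s, |deriv (Ψ δ) r - deriv (Ψ δ) s| ≤ CΨ / δ * |r - s| := by
    intro r s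
    exact Convex.norm_image_sub_le_of_norm_deriv_le (f := deriv (Ψ δ)) (C := CΨ / δ)
      (s := Set.univ) (x := s) (y := r) (fun y _ => hΨd y) (fun y _ => hb2 y)
      convex_univ (Set.mem_univ _) (Set.mem_univ _)
  have ha : 0 < 2 * δ / d := by positivity
  have hD0 : ∀ x, 2 * δ / d < |x| → Gop Ψ δ R₀ S₂ x - Gop Ψ δ R₀ S₁ x = 0 := by
    intro x hx
    unfold Gop
    rcases lt_abs.1 hx with h | h
    · have p1 := f₁p x h
      have p2 := f₂p x h
      rw [hsgn _ (p1.le.trans (le_abs_self _)), hsgn _ (p2.le.trans (le_abs_self _)),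
        Real.sign_of_pos (hδ.trans p1), Real.sign_of_pos (hδ.trans p2)]
      ring
    · have p1 := f₁m x (by linarith)
      have p2 := f₂m x (by linarith)
      rw [hsgn _ (le_trans (by linarith) (neg_le_abs _)),
        hsgn _ (le_trans (by linarith) (neg_le_abs _)),
        Real.sign_of_neg (show R₀ x + S₂ x < 0 by linarith),
        Real.sign_of_neg (show R₀ x + S₁ x < 0 by linarith)]
      ring
  have hDb : ∀ x, |Gop Ψ δ R₀ S₂ x - Gop Ψ δ R₀ S₁ x| ≤ 2 * CΨ / d * N := by
    intro x
    by_cases hx : 2 * δ / d < |x|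
    · rw [hD0 x hx, abs_zero]; positivity
    · push Not at hx
      have e : Gop Ψ δ R₀ S₂ x - Gop Ψ δ R₀ S₁ x
          = deriv (Ψ δ) (R₀ x + S₂ x) - deriv (Ψ δ) (R₀ x + S₁ x) := by
        unfold Gop; ring
      rw [e]
      refine (hLip _ _).trans ?_
      rw [show R₀ x + S₂ x - (R₀ x + S₁ x) = S₂ x - S₁ x by ring]
      calc CΨ / δ * |S₂ x - S₁ x| ≤ CΨ / δ * (N * (2 * δ / d)) := by
            gcongr
            exact (hSdiff x).trans (by gcongr)
        _ = 2 * CΨ / d * N := by field_simp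
  have hI₁ := Gop_int hΨd.continuous hR.continuous hS₁.continuous
  have hI₂ := Gop_int hΨd.continuous hR.continuous hS₂.continuous
  have hA1 : ∀ x, |Aop (Gop Ψ δ R₀ S₂) x - Aop (Gop Ψ δ R₀ S₁) x|
      ≤ 2 * CΨ / d * N * (2 * (2 * δ / d)) := by
    intro x
    rw [Aop_sub hI₂ hI₁]
    exact Aop_bound_supp ha.le hDb hD0 x
  have hA2 : ∀ x, |Aop (Aop (Gop Ψ δ R₀ S₂)) x - Aop (Aop (Gop Ψ δ R₀ S₁)) x|
      ≤ 2 * CΨ / d * N * (2 * (2 * δ / d)) := by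
    intro x
    rw [Aop_sub (fun a b => (Aop_cont hI₂).intervalIntegrable a b)
      (fun a b => (Aop_cont hI₁).intervalIntegrable a b)]
    exact Aop_bound hA1 x
  calc _ ≤ 2 * CΨ / d * N * (2 * (2 * δ / d)) + 2 * CΨ / d * N * (2 * (2 * δ / d))
        + δ * (2 * CΨ / d * N) := by
        gcongr
        · exact supNorm_le_of hA2
        · exact supNorm_le_of hA1
        · exact supNorm_le_of hDb
    _ = _ := by ring
end

section
/- Let c ∈ (0,1) and let R₀ be an unperturbed wave. Then for any constants C₀, C₁ > 0 there exists δ₀ > 0 such that for every 0 < δ < δ₀, every S ∈ W^{2,∞}(ℝ) with S(0) = 0, ‖S‖_∞ ≤ C₀δ², and ‖S'‖_∞ ≤ C₁δ is δ-admissible relative to R₀. -/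
open MeasureTheory Real Filter Topology

/-- every small ball in `W^{2,∞}` (smallness `‖S‖_∞ ≤ C₀δ²`,
`‖S'‖_∞ ≤ C₁δ`) consists of `δ`-admissible functions, for `δ` small enough. -/
theorem stmt12 (c : ℝ) (hc0 : 0 < c) (hc1 : c < 1)
    (R₀ : ℝ → ℝ) (hR₀ : UnperturbedWave c R₀)
    (C₀ C₁ : ℝ) (hC₀ : 0 < C₀) (hC₁ : 0 < C₁) :
    ∃ δ₀ : ℝ, 0 < δ₀ ∧
      ∀ δ : ℝ, 0 < δ → δ < δ₀ →
        ∀ S : ℝ → ℝ, IsW2inf S → S 0 = 0 →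
          (∀ x, |S x| ≤ C₀ * δ ^ 2) → (∀ x, |deriv S x| ≤ C₁ * δ) →
          Admissible δ R₀ S := by
  obtain ⟨⟨hRd, -, K, hK⟩, hR0, -, x₀, r₀, d₀, hx₀, hr₀, hd₀, hp, hm, hd⟩ := hR₀
  have ha : d₀ < deriv R₀ 0 := hd 0 (by simpa using hx₀)
  set a := deriv R₀ 0 with hadef
  have ha0 : 0 < a := hd₀.trans ha
  have hK0 : (0 : ℝ) ≤ K := K.2
  obtain ⟨η, hη0, hηx, hηK⟩ : ∃ η : ℝ, 0 < η ∧ η < x₀ ∧ K * η < a / 4 := by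
    refine ⟨min (x₀ / 2) (a / (8 * (K + 1))), by positivity, ?_, ?_⟩
    · exact (min_le_left _ _).trans_lt (by linarith)
    · have h1 : K * min (x₀ / 2) (a / (8 * (K + 1))) ≤ (K + 1) * (a / (8 * (K + 1))) := by
        apply mul_le_mul (by linarith) (min_le_right _ _) (by positivity) (by positivity)
      have h2 : ((K : ℝ) + 1) * (a / (8 * (K + 1))) = a / 8 := by
        field_simp
      linarith
  have hmono : StrictMonoOn R₀ (Set.Icc (-x₀) x₀) := by
    apply strictMonoOn_of_deriv_pos (convex_Icc _ _) hRd.continuous.continuousOn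
    intro x hx
    rw [interior_Icc] at hx
    exact hd₀.trans (hd x (abs_lt.2 hx))
  have hRη : 0 < R₀ η := by
    rw [← hR0]
    exact hmono ⟨by linarith, by linarith⟩ ⟨by linarith, by linarith⟩ hη0
  have hRη' : R₀ (-η) < 0 := by
    rw [← hR0]
    exact hmono ⟨by linarith, by linarith⟩ ⟨by linarith, by linarith⟩ (by linarith)
  obtain ⟨m, hm0, hmr, hm1, hm2⟩ : ∃ m : ℝ, 0 < m ∧ m ≤ r₀ ∧ m ≤ R₀ η ∧ m ≤ -R₀ (-η) := by
    refine ⟨min r₀ (min (R₀ η) (-R₀ (-η))), ?_, min_le_left _ _,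
      (min_le_right _ _).trans (min_le_left _ _), (min_le_right _ _).trans (min_le_right _ _)⟩
    exact lt_min hr₀ (lt_min hRη (by linarith))
  have hfarp : ∀ x, η ≤ x → m ≤ R₀ x := by
    intro x hx
    rcases le_or_gt x x₀ with h | h
    · exact hm1.trans (hmono.monotoneOn ⟨by linarith, by linarith⟩ ⟨by linarith, h⟩ hx)
    · exact hmr.trans (hp x h).le
  have hfarm : ∀ x, x ≤ -η → R₀ x ≤ -m := by
    intro x hx
    rcases le_or_gt (-x₀) x with h | h
    · have := hmono.monotoneOn ⟨h, by linarith⟩ (⟨by linarith, by linarith⟩ : -η ∈ Set.Icc (-x₀) x₀) hx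
      linarith
    · have := hm x h
      linarith
  refine ⟨min 1 (min (a / (4 * C₁)) (m / (1 + C₀))), by positivity, ?_⟩
  intro δ hδ hδ' S hS hS0 hSb hSd
  obtain ⟨hδ1, hδ2, hδ3⟩ : δ < 1 ∧ δ < a / (4 * C₁) ∧ δ < m / (1 + C₀) := by
    simpa [lt_min_iff] using hδ'
  rw [lt_div_iff₀ (by positivity)] at hδ2 hδ3
  have hsm : C₀ * δ ^ 2 + δ < m := by
    have : C₀ * (δ * δ) ≤ C₀ * δ := by
      apply mul_le_mul_of_nonneg_left _ hC₀.le
      nlinarith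
    nlinarith
  have hTp : ∀ x, η ≤ x → δ < R₀ x + S x := by
    intro x hx
    have h1 := hfarp x hx
    have h2 := (abs_le.1 (hSb x)).1
    linarith
  have hTm : ∀ x, x ≤ -η → R₀ x + S x < -δ := by
    intro x hx
    have h1 := hfarm x hx
    have h2 := (abs_le.1 (hSb x)).2
    linarith
  have hder : ∀ x, -η < x → x < η →
      a / 2 < deriv R₀ x + deriv S x ∧ deriv R₀ x + deriv S x < 2 * a := by
    intro x h1 h2
    have h3 := hK.dist_le_mul x 0
    rw [Real.dist_eq, Real.dist_eq, sub_zero] at h3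
    have h4 : |x| ≤ η := abs_le.2 ⟨h1.le, h2.le⟩
    have h5 := mul_le_mul_of_nonneg_left h4 hK0
    have h6 := abs_le.1 (h3.trans h5)
    have h7 := abs_le.1 (hSd x)
    constructor <;> linarith [h6.1, h6.2, h7.1, h7.2]
  have hcont : Continuous (fun x => R₀ x + S x) := hRd.continuous.add hS.1.continuous
  have hTmono : StrictMonoOn (fun x => R₀ x + S x) (Set.Icc (-η) η) := by
    apply strictMonoOn_of_deriv_pos (convex_Icc _ _) hcont.continuousOn
    intro x hx
    rw [interior_Icc] at hx
    have h := (hder x hx.1 hx.2).1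
    have e : deriv (fun x => R₀ x + S x) x = deriv R₀ x + deriv S x :=
      deriv_fun_add (hRd x) (hS.1 x)
    rw [e]
    linarith
  have hpe := hTp η le_rfl
  have hme := hTm (-η) le_rfl
  obtain ⟨xp, ⟨hxp1, hxp2⟩, hxp⟩ := intermediate_value_Ioo hη0.le hcont.continuousOn
    (show δ ∈ Set.Ioo (R₀ 0 + S 0) (R₀ η + S η) from ⟨by rw [hR0, hS0]; linarith, hpe⟩)
  obtain ⟨xm, ⟨hxm1, hxm2⟩, hxm⟩ := intermediate_value_Ioo (show -η ≤ 0 by linarith)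
    hcont.continuousOn
    (show -δ ∈ Set.Ioo (R₀ (-η) + S (-η)) (R₀ 0 + S 0) from ⟨hme, by rw [hR0, hS0]; linarith⟩)
  refine ⟨hS, hS0, xm, xp, hxm2, hxp1, hxm, hxp, ?_, ?_, ?_⟩
  · intro x hx
    rcases le_or_gt x (-η) with h | h
    · exact hTm x h
    · rw [← hxm]
      exact hTmono ⟨h.le, by linarith⟩ ⟨hxm1.le, by linarith⟩ hx
  · intro x hx
    rcases le_or_gt η x with h | h
    · exact hTp x h
    · have := hTmono ⟨by linarith, hxp2.le⟩ ⟨by linarith, h.le⟩ hx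
      simp only at this hxp
      linarith
  · intro x h1 h2
    exact hder x (by linarith) (by linarith)
end
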